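/- Let A : ℝ³ → ℝ³ be the linear map A(u₁, u₂, u₃) = (−u₂, u₁, −u₂), ξ(p) = e^{−y}(0, 0, 1), and η_p(u) = e^{y}(u₃ − u₁), for p = (x, y, z) ∈ ℝ³. For the constant vector fields E₁(p) = (1, 0, 0) and E₂(p) = (0, 1, 0), the tensor N⁽¹⁾(X, Y) = N_A(X, Y) + (X(η(Y)) − Y(η(X)) − η([X, Y]))·ξ satisfies N⁽¹⁾(E₁, E₂)(p) = (0, 0, 1) for every p ∈ ℝ³; in particular N⁽¹⁾ ≠ 0. -/

import Mathlib

/-- The constant-coefficient tensor `A(u) = (−u₂, u₁, −u₂)` of Example 4.4. -/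
def Amap (u : Fin 3 → ℝ) : Fin 3 → ℝ := ![-u 1, u 0, -u 1]

/-- The Reeb vector field `ξ(p) = e^{−y}(0,0,1)` of Example 4.4. -/
noncomputable def xiVF (p : Fin 3 → ℝ) : Fin 3 → ℝ := Real.exp (-p 1) • ![0, 0, 1]

/-- The 1-form `η_p(u) = e^{y}(u₃ − u₁)` of Example 4.4. -/
noncomputable def etaForm (p u : Fin 3 → ℝ) : ℝ := Real.exp (p 1) * (u 2 - u 0)

/-- The Lie bracket of vector fields on `ℝ³`. -/
noncomputable def lieBr (X Y : (Fin 3 → ℝ) → Fin 3 → ℝ) (p : Fin 3 → ℝ) : Fin 3 → ℝ :=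
  fderiv ℝ Y p (X p) - fderiv ℝ X p (Y p)

/-- The Nijenhuis torsion of `A`. -/
noncomputable def nijA (X Y : (Fin 3 → ℝ) → Fin 3 → ℝ) (p : Fin 3 → ℝ) : Fin 3 → ℝ :=
  Amap (Amap (lieBr X Y p)) + lieBr (Amap ∘ X) (Amap ∘ Y) p
    - Amap (lieBr (Amap ∘ X) Y p) - Amap (lieBr X (Amap ∘ Y) p)

/-- The normality tensor `N⁽¹⁾ = N_A + 2 dη ⊗ ξ`. -/
noncomputable def None (X Y : (Fin 3 → ℝ) → Fin 3 → ℝ) (p : Fin 3 → ℝ) : Fin 3 → ℝ :=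
  nijA X Y p +
    (fderiv ℝ (fun q => etaForm q (Y q)) p (X p)
      - fderiv ℝ (fun q => etaForm q (X q)) p (Y p)
      - etaForm p (lieBr X Y p)) • xiVF p

/-!
The linear map `A` commutes with directional derivatives, so its Nijenhuis torsion vanishes
identically and only `2dη ⊗ ξ` survives. There the Leibniz rule leaves `X₂ η(Y) - Y₂ η(X)`, which
comes from differentiating the factor `e^y` of `η`, and this `e^y` cancels the `e^{-y}` of `ξ`. At
`X = E₁`, `Y = E₂` the result is `-η(E₁) ξ = (0, 0, 1)`.
-/

/-- The tensor `A` as a continuous linear map, which gives access to the calculus of linear maps;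
`Amap` itself is a bare function. -/
noncomputable def AmapCLM : (Fin 3 → ℝ) →L[ℝ] (Fin 3 → ℝ) :=
  LinearMap.toContinuousLinearMap
    { toFun := Amap
      map_add' := fun u v => by
        ext i
        fin_cases i <;> simp [Amap, add_comm]
      map_smul' := fun c u => by
        ext i
        fin_cases i <;> simp [Amap] }

lemma coe_AmapCLM : ⇑AmapCLM = Amap := rfl

lemma Amap_sub (u v : Fin 3 → ℝ) : Amap (u - v) = Amap u - Amap v :=
  map_sub AmapCLM u v

lemma etaForm_sub (p u v : Fin 3 → ℝ) : etaForm p (u - v) = etaForm p u - etaForm p v := by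
  simp only [etaForm, Pi.sub_apply]
  ring

lemma etaForm_smul_xiVF (p u : Fin 3 → ℝ) : etaForm p u • xiVF p = (u 2 - u 0) • ![0, 0, 1] := by
  rw [etaForm, xiVF, smul_smul, mul_right_comm, ← Real.exp_add, add_neg_cancel, Real.exp_zero,
    one_mul]

section VectorField

variable {X Y : (Fin 3 → ℝ) → Fin 3 → ℝ} {p : Fin 3 → ℝ}

lemma fderiv_Amap_comp (hX : DifferentiableAt ℝ X p) (v : Fin 3 → ℝ) :
    fderiv ℝ (Amap ∘ X) p v = Amap (fderiv ℝ X p v) := by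
  rw [← coe_AmapCLM, (AmapCLM.hasFDerivAt.comp p hX.hasFDerivAt).fderiv,
    ContinuousLinearMap.comp_apply]

lemma nijA_eq_zero (hX : DifferentiableAt ℝ X p) (hY : DifferentiableAt ℝ Y p) :
    nijA X Y p = 0 := by
  simp only [nijA, lieBr, fderiv_Amap_comp hX, fderiv_Amap_comp hY, Function.comp_apply, Amap_sub]
  abel

lemma fderiv_etaForm_apply (hY : DifferentiableAt ℝ Y p) (v : Fin 3 → ℝ) :
    fderiv ℝ (fun q => etaForm q (Y q)) p v
      = v 1 * etaForm p (Y p) + etaForm p (fderiv ℝ Y p v) := by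
  have hcoord (i : Fin 3) := hasFDerivAt_pi'.mp hY.hasFDerivAt i
  have heta : HasFDerivAt (fun q => etaForm q (Y q)) _ p :=
    (hasFDerivAt_apply (𝕜 := ℝ) 1 p).exp.mul ((hcoord 2).sub (hcoord 0))
  rw [heta.fderiv]
  simp only [add_apply, smul_apply, sub_apply, ContinuousLinearMap.comp_apply,
    ContinuousLinearMap.proj_apply, smul_eq_mul, etaForm]
  ring

lemma None_apply_of_differentiableAt (hX : DifferentiableAt ℝ X p) (hY : DifferentiableAt ℝ Y p) :
    None X Y p = (X p 1 * (Y p 2 - Y p 0) - Y p 1 * (X p 2 - X p 0)) • ![0, 0, 1] := by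
  have hdeta : fderiv ℝ (fun q => etaForm q (Y q)) p (X p)
      - fderiv ℝ (fun q => etaForm q (X q)) p (Y p) - etaForm p (lieBr X Y p)
      = X p 1 * etaForm p (Y p) - Y p 1 * etaForm p (X p) := by
    rw [fderiv_etaForm_apply hX, fderiv_etaForm_apply hY, lieBr, etaForm_sub]
    ring
  rw [None, nijA_eq_zero hX hY, zero_add, hdeta, sub_smul, mul_smul, mul_smul,
    etaForm_smul_xiVF, etaForm_smul_xiVF, smul_smul, smul_smul, ← sub_smul]

end VectorField

/-- On the constant coordinate fields `E₁ = ∂/∂x`, `E₂ = ∂/∂y`, the normality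
tensor evaluates to `(0,0,1)` at every point; in particular `N⁽¹⁾ ≠ 0` and the
structure of Example 4.4 is not normal. -/
theorem normality_tensor_nonzero :
    (∀ p : Fin 3 → ℝ,
        None (fun _ => ![1, 0, 0]) (fun _ => ![0, 1, 0]) p = ![0, 0, 1]) ∧
      None (fun _ => ![1, 0, 0]) (fun _ => ![0, 1, 0]) ≠ fun _ => 0 := by
  have hN : ∀ p : Fin 3 → ℝ,
      None (fun _ => ![1, 0, 0]) (fun _ => ![0, 1, 0]) p = ![0, 0, 1] := fun p => by
    rw [None_apply_of_differentiableAt (differentiableAt_const _) (differentiableAt_const _)]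
    simp
  refine ⟨hN, fun hzero => ?_⟩
  have h01 : (![0, 0, 1] : Fin 3 → ℝ) = 0 := (hN 0).symm.trans (congrFun hzero 0)
  simpa using congrFun h01 2
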